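/- arXiv:2301.09104 — 3 statements merged into one kernel-verified Lean document; each statement's English description precedes it below -/
import Mathlib

section
/- The polynomial x_{n+1} − x_1 is a nonzerodivisor on the quotient ring R_{n+1}/P_n; that is, for every f ∈ R_{n+1}, if (x_{n+1} − x_1)·f ∈ P_n then f ∈ P_n. -/
noncomputable section

open MvPolynomial

/-- Row of the Laplacian matrix of the `n`-cycle on `Fin n`
(vertex `j` of the paper corresponds to index `j-1`). -/
def cycLap (n : ℕ) [NeZero n] (j : Fin n) : Fin n → ℤ :=
  fun l => if l = j then 2 else if l = j + 1 ∨ j = l + 1 then -1 else 0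

/-- The cycle graph `C_n` on `Fin n`. -/
def cycleG (n : ℕ) [NeZero n] : SimpleGraph (Fin n) :=
  SimpleGraph.fromRel (fun i j => j = i + 1)

/-- The lattice ideal of a lattice `L ⊆ ℤ^n` in `K[x_1,…,x_n]`. -/
def latticeIdeal (n : ℕ) (K : Type*) [Field K] (L : Submodule ℤ (Fin n → ℤ)) :
    Ideal (MvPolynomial (Fin n) K) :=
  Ideal.span { f | ∃ u v : Fin n → ℕ,
    ((fun i => (u i : ℤ)) - fun i => (v i : ℤ)) ∈ L ∧
    f = (∏ i, X i ^ u i) - ∏ i, X i ^ v i }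

open Classical in
/-- The exponent vector of the monomial `x^{S → S̄}`: the `i`-th entry is the number
of edges of the cycle joining `i ∈ S` to the complement of `S`. -/
def outVec (n : ℕ) [NeZero n] (S : Set (Fin n)) (i : Fin n) : ℕ :=
  if i ∈ S then (if i + 1 ∈ S then 0 else 1) + (if i - 1 ∈ S then 0 else 1) else 0

/-- The monomial `x^{S → S̄}`. -/
def outMono (n : ℕ) (K : Type*) [NeZero n] [Field K] (S : Set (Fin n)) :
    MvPolynomial (Fin n) K :=
  ∏ i, X i ^ outVec n S i

open Classical in
/-- `b_V = ∑_{j ∈ V} b_j`, sum of Laplacian rows over a set of vertices. -/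
def bPart (n : ℕ) [NeZero n] (S : Set (Fin n)) : Fin n → ℤ :=
  ∑ j : Fin n, if j ∈ S then cycLap n j else 0

/-- The toppling ideal of the parcycle `(C_n, {V_1,…,V_k})`: the lattice ideal of the
lattice generated by the vectors `b_{V_j}`. -/
def topplingPar (n k : ℕ) (K : Type*) [NeZero n] [Field K] (V : Fin k → Set (Fin n)) :
    Ideal (MvPolynomial (Fin n) K) :=
  latticeIdeal n K (Submodule.span ℤ (Set.range fun j => bPart n (V j)))

/-- `S` is a connected-parset of the parcycle `(C_n, V)`: a union of parts inducing a
connected subgraph of the cycle. -/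
def isConnParset (n k : ℕ) [NeZero n] (V : Fin k → Set (Fin n)) (S : Set (Fin n)) : Prop :=
  (∃ T : Set (Fin k), S = ⋃ j ∈ T, V j) ∧ ((cycleG n).induce S).Connected

/-- The `G`-parking function ideal of a parcycle with sink part `V sink`. -/
def gparkIdeal (n k : ℕ) (K : Type*) [NeZero n] [Field K] (V : Fin k → Set (Fin n))
    (sink : Fin k) : Ideal (MvPolynomial (Fin n) K) :=
  Ideal.span { f | ∃ S : Set (Fin n), isConnParset n k V S ∧ ¬ V sink ⊆ S ∧
    f = outMono n K S }

/-- The index in `Fin (n+1)` of the paper's variable `x_m`, `1 ≤ m ≤ n+1`. -/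
def xIdx (n : ℕ) (m : ℕ) : Fin (n + 1) := ⟨(m - 1) % (n + 1), Nat.mod_lt _ (Nat.succ_pos n)⟩

/-- The defining ideal `P_n ⊆ K[x_1,…,x_{n+1}]` of the rational normal curve of degree `n`. -/
def Pideal (n : ℕ) (K : Type*) [Field K] : Ideal (MvPolynomial (Fin (n + 1)) K) :=
  Ideal.span { f | ∃ i j : ℕ, 2 ≤ i ∧ i ≤ j ∧ j ≤ n ∧
    f = X (xIdx n i) * X (xIdx n j) - X (xIdx n (i - 1)) * X (xIdx n (j + 1)) }

open Classical in
/-- The `λ`-weight of an exponent vector. -/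
def wdeg (n : ℕ) (lam : Fin n → ℕ) (u : Fin n →₀ ℕ) : ℕ := ∑ i, lam i * u i

open Classical in
/-- The `λ`-initial form of a polynomial: the sum of its terms of maximal `λ`-weight. -/
def initForm (n : ℕ) (K : Type*) [Field K] (lam : Fin n → ℕ) (f : MvPolynomial (Fin n) K) :
    MvPolynomial (Fin n) K :=
  ∑ u ∈ f.support.filter (fun u => wdeg n lam u = f.support.sup (wdeg n lam)),
    monomial u (coeff u f)

/-- The `λ`-initial ideal of an ideal. -/
def initIdeal (n : ℕ) (K : Type*) [Field K] (lam : Fin n → ℕ)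
    (I : Ideal (MvPolynomial (Fin n) K)) : Ideal (MvPolynomial (Fin n) K) :=
  Ideal.span { g | ∃ f ∈ I, f ≠ 0 ∧ g = initForm n K lam f }

/-!
`P_n` is the kernel of the parametrisation `x_i ↦ s t ^ (i - 1)` of the rational normal curve, so it
is prime, and `x_{n+1} - x_1 ↦ s (t ^ n - 1) ≠ 0` does not lie in it. That the kernel is no larger
than `P_n` holds because the quadratic relations rewrite a monomial of degree `d` and weight `w`
(where `x_i` has weight `i - 1`) into a product depending only on `d` and `w`, that is, only on the
image `s ^ d t ^ w` of the monomial.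
-/

/-- The relations of the rational normal curve of degree `n` on a sequence `y`, of which only the
terms `y 0, …, y n` matter: the 2×2 minors of the Hankel matrix with rows `(y 0, …, y (n - 1))` and
`(y 1, …, y n)` vanish. Written multiplicatively, so that it makes sense in a monoid. -/
def HankelRelations {M : Type*} [Mul M] (n : ℕ) (y : ℕ → M) : Prop :=
  ∀ a b, a < b → b < n → y (a + 1) * y b = y a * y (b + 1)

/-- The normal form of a product of `d` of the elements `y 0, …, y n` with indices summing to `w`,
obtained greedily: each factor takes as much of the remaining index sum as possible. It is
meaningful only for `w ≤ d * n`; beyond that the excess is dropped. -/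
def hankelNormalForm {M : Type*} [CommMonoid M] (n : ℕ) (y : ℕ → M) : ℕ → ℕ → M
  | 0, _ => 1
  | d + 1, w => y (min w n) * hankelNormalForm n y d (w - min w n)

namespace HankelRelations

section Monoid

variable {M : Type*} [CommMonoid M] {n : ℕ} {y : ℕ → M}

theorem mul_shift (hy : HankelRelations n y) {a b k : ℕ} (hab : a + k ≤ b) (hb : b + k ≤ n) :
    y (a + k) * y b = y a * y (b + k) := by
  induction k generalizing b with
  | zero => rfl
  | succ k ih =>
    calc y (a + k + 1) * y b = y (a + k) * y (b + 1) := hy _ _ (by lia) (by lia)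
      _ = y a * y (b + 1 + k) := ih (by lia) (by lia)
      _ = y a * y (b + (k + 1)) := by rw [add_assoc, add_comm 1 k]

theorem mul_eq_mul_of_add_eq_add (hy : HankelRelations n y) {a b c d : ℕ} (ha : a ≤ n)
    (hb : b ≤ n) (hc : c ≤ n) (hd : d ≤ n) (h : a + b = c + d) : y a * y b = y c * y d := by
  wlog hab : a ≤ b generalizing a b
  · rw [mul_comm, this hb ha (by lia) (by lia)]
  wlog hcd : c ≤ d generalizing c d
  · rw [mul_comm (y c), this hd hc (by lia) (by lia)]
  wlog hac : a ≤ c generalizing a b c d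
  · exact (this hc hd hcd ha hb h.symm hab (by lia)).symm
  obtain ⟨k, rfl⟩ := Nat.exists_eq_add_of_le hac
  obtain rfl : b = d + k := by lia
  exact (hy.mul_shift hcd hb).symm

theorem mul_hankelNormalForm (hy : HankelRelations n y) {a d w : ℕ} (ha : a ≤ n)
    (hw : w ≤ d * n) :
    y a * hankelNormalForm n y d w = hankelNormalForm n y (d + 1) (w + a) := by
  induction d generalizing w a with
  | zero =>
    obtain rfl : w = 0 := by simpa using hw
    simp [hankelNormalForm, ha]
  | succ d ih =>
    rw [Nat.succ_mul] at hw
    have exchange : y a * y (min w n) = y (min (w + a) n) * y (a + min w n - min (w + a) n) :=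
      hy.mul_eq_mul_of_add_eq_add ha (by lia) (by lia) (by lia) (by lia)
    have remaining : w - min w n + (a + min w n - min (w + a) n) = w + a - min (w + a) n := by lia
    rw [hankelNormalForm, ← mul_assoc, exchange, mul_assoc, ih (by lia) (by lia), remaining]
    rfl

theorem prod_map_eq_hankelNormalForm (hy : HankelRelations n y) (s : Multiset ℕ)
    (hs : ∀ a ∈ s, a ≤ n) : (s.map y).prod = hankelNormalForm n y s.card s.sum := by
  induction s using Multiset.induction with
  | empty => simp [hankelNormalForm]
  | cons a s ih =>
    rw [Multiset.forall_mem_cons] at hs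
    have sum_le : s.sum ≤ s.card * n := s.sum_le_card_nsmul n hs.2
    rw [Multiset.map_cons, Multiset.prod_cons, ih hs.2, hy.mul_hankelNormalForm hs.1 sum_le,
      Multiset.card_cons, Multiset.sum_cons, add_comm a]

end Monoid

end HankelRelations

theorem aeval_monomial_eq_smul_prod_toMultiset {σ R A : Type*} [CommSemiring R] [CommSemiring A]
    [Algebra R A] (y : σ → A) (u : σ →₀ ℕ) (r : R) :
    aeval y (monomial u r) = r • (u.toMultiset.map y).prod := by
  classical
  rw [aeval_monomial, Algebra.smul_def, Finsupp.toMultiset_map, Finsupp.prod_toMultiset,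
    Finsupp.prod_mapDomain_index (by simp) (by simp [pow_add])]

theorem prod_map_pow_eq_pow_sum {ι M : Type*} [CommMonoid M] (s : Multiset ι) (f : ι → ℕ) (x : M) :
    (s.map fun i => x ^ f i).prod = x ^ (s.map f).sum := by
  induction s using Multiset.induction with
  | empty => simp
  | cons i s ih => simp [ih, pow_add]

section Parametrization

variable (R : Type*) [CommSemiring R] (n : ℕ)

/-- The parametrisation `x_i ↦ s t ^ i` (indices from `0`) of the rational normal curve of degree
`n`, with `s = X 0` and `t = X 1`. -/
def rationalNormalParam : MvPolynomial (Fin (n + 1)) R →ₐ[R] MvPolynomial (Fin 2) R :=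
  aeval fun i => X 0 * X 1 ^ (i : ℕ)

theorem rationalNormalParam_monomial (u : Fin (n + 1) →₀ ℕ) (r : R) :
    rationalNormalParam R n (monomial u r) =
      r • (X 0 ^ u.toMultiset.card * X 1 ^ (u.toMultiset.map Fin.val).sum) := by
  rw [rationalNormalParam, aeval_monomial_eq_smul_prod_toMultiset, Multiset.prod_map_mul,
    Multiset.map_const', Multiset.prod_replicate, prod_map_pow_eq_pow_sum]

variable {A : Type*} [CommSemiring A] [Algebra R A]

/-- The `R`-linear map sending `s ^ d t ^ w` to the normal form of degree `d` and index sum `w`.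
Under the Hankel relations it factors `aeval y` through the parametrisation. -/
def normalFormMap (y : ℕ → A) : MvPolynomial (Fin 2) R →ₗ[R] A :=
  (basisMonomials (Fin 2) R).constr R fun m => hankelNormalForm n y (m 0) (m 1)

variable {R n}

theorem normalFormMap_X_pow_mul_X_pow (y : ℕ → A) (d w : ℕ) :
    normalFormMap R n y (X 0 ^ d * X 1 ^ w) = hankelNormalForm n y d w := by
  have eq_basis : (X 0 ^ d * X 1 ^ w : MvPolynomial (Fin 2) R) =
      basisMonomials (Fin 2) R (Finsupp.single 0 d + Finsupp.single 1 w) := by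
    simp [X_pow_eq_monomial, monomial_mul]
  rw [eq_basis, normalFormMap, Module.Basis.constr_basis]
  simp

namespace HankelRelations

variable {y : ℕ → A}

theorem normalFormMap_rationalNormalParam (hy : HankelRelations n y)
    (f : MvPolynomial (Fin (n + 1)) R) :
    normalFormMap R n y (rationalNormalParam R n f) = aeval (fun i : Fin (n + 1) => y i) f := by
  induction f using MvPolynomial.induction_on' with
  | monomial u r =>
    have prod_eq := hy.prod_map_eq_hankelNormalForm (u.toMultiset.map Fin.val)
      (Multiset.forall_mem_map_iff.2 fun i _ => i.is_le)
    rw [Multiset.map_map, Multiset.card_map] at prod_eq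
    rw [rationalNormalParam_monomial, map_smul, normalFormMap_X_pow_mul_X_pow, ← prod_eq,
      aeval_monomial_eq_smul_prod_toMultiset]
    rfl
  | add p q hp hq => rw [map_add, map_add, hp, hq, map_add]

theorem ker_rationalNormalParam_le_ker_aeval (hy : HankelRelations n y) :
    RingHom.ker (rationalNormalParam R n) ≤
      RingHom.ker (aeval (R := R) fun i : Fin (n + 1) => y i) := by
  intro f hf
  rw [RingHom.mem_ker] at hf ⊢
  rw [← hy.normalFormMap_rationalNormalParam, hf, map_zero]

end HankelRelations

end Parametrization

theorem rationalNormalParam_X_last_sub_X_zero_ne_zero (R : Type*) [CommRing R] [Nontrivial R]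
    {n : ℕ} (hn : n ≠ 0) : rationalNormalParam R n (X (Fin.last n) - X 0) ≠ 0 := by
  intro image_eq_zero
  have eval_eq_zero := congrArg (eval ![1, 0]) image_eq_zero
  simp [rationalNormalParam, hn] at eval_eq_zero

section Pideal

variable {K : Type*} [Field K] {n : ℕ}

theorem val_xIdx_add_one {a : ℕ} (ha : a ≤ n) : (xIdx n (a + 1) : ℕ) = a :=
  Nat.mod_eq_of_lt (Nat.lt_succ_of_le ha)

theorem xIdx_val_add_one (i : Fin (n + 1)) : xIdx n (i + 1) = i :=
  Fin.ext (val_xIdx_add_one i.is_le)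

theorem HankelRelations.Pideal_le_ker_aeval {A : Type*} [CommRing A] [Algebra K A] {y : ℕ → A}
    (hy : HankelRelations n y) :
    Pideal n K ≤ RingHom.ker (aeval (R := K) fun i : Fin (n + 1) => y i) := by
  refine Ideal.span_le.2 ?_
  rintro _ ⟨i, j, hi, hij, hj, rfl⟩
  obtain ⟨a, rfl⟩ := Nat.exists_eq_add_of_le' hi
  obtain ⟨b, rfl⟩ := Nat.exists_eq_add_of_le' (one_le_two.trans (hi.trans hij))
  rw [SetLike.mem_coe, RingHom.mem_ker, map_sub, map_mul, map_mul, aeval_X, aeval_X, aeval_X,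
    aeval_X, sub_eq_zero, show a + 2 - 1 = a + 1 from rfl, val_xIdx_add_one (by lia),
    val_xIdx_add_one (by lia), val_xIdx_add_one (by lia), val_xIdx_add_one (by lia)]
  exact hy a b (by lia) (by lia)

theorem hankelRelations_mk_X_xIdx :
    HankelRelations n fun a => Ideal.Quotient.mk (Pideal n K) (X (xIdx n (a + 1))) := by
  intro a b hab hb
  rw [← map_mul, ← map_mul, Ideal.Quotient.eq]
  exact Ideal.subset_span ⟨a + 2, b + 1, by lia, by lia, by lia, rfl⟩

theorem Pideal_eq_ker_rationalNormalParam :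
    Pideal n K = RingHom.ker (rationalNormalParam K n) := by
  apply le_antisymm
  · have hankel : HankelRelations n fun a => (X 0 * X 1 ^ a : MvPolynomial (Fin 2) K) :=
      fun a b _ _ => by ring
    exact hankel.Pideal_le_ker_aeval
  · have aeval_eq_mk : aeval (fun i : Fin (n + 1) =>
        Ideal.Quotient.mk (Pideal n K) (X (xIdx n (i + 1)))) = Ideal.Quotient.mkₐ K (Pideal n K) :=
      algHom_ext fun i => by rw [aeval_X, xIdx_val_add_one, Ideal.Quotient.mkₐ_eq_mk]
    have ker_le := HankelRelations.ker_rationalNormalParam_le_ker_aeval (R := K)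
      (hankelRelations_mk_X_xIdx (K := K) (n := n))
    rw [aeval_eq_mk] at ker_le
    exact ker_le.trans (Ideal.Quotient.mkₐ_ker K _).le

theorem isPrime_Pideal : (Pideal n K).IsPrime := by
  rw [Pideal_eq_ker_rationalNormalParam]
  exact RingHom.ker_isPrime _

theorem X_last_sub_X_zero_notMem_Pideal (hn : n ≠ 0) : X (Fin.last n) - X 0 ∉ Pideal n K := by
  rw [Pideal_eq_ker_rationalNormalParam, RingHom.mem_ker]
  exact rationalNormalParam_X_last_sub_X_zero_ne_zero K hn

end Pideal

/-- `x_{n+1} - x_1` is a nonzerodivisor on `R_{n+1}/P_n`. -/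
theorem statement_1 (K : Type*) [Field K] (n : ℕ) (hn : 2 ≤ n) :
    ∀ f : MvPolynomial (Fin (n + 1)) K,
      (X (Fin.last n) - X (0 : Fin (n + 1))) * f ∈ Pideal n K → f ∈ Pideal n K := by
  intro f hf
  exact (isPrime_Pideal.mem_or_mem hf).resolve_left
    (X_last_sub_X_zero_notMem_Pideal (Nat.ne_zero_of_lt hn))
end
end

section
/- Let (C_n,Π) be a parcycle with Π = {V_1,…,V_k}, k ≥ 2, sink V_k, and A = A_{(C_n,Π)}. Then the set of monomials {x^{S→S̄} : S a connected-parset of (C_n,Π) not containing V_k} is equal to the set of anti-diagonals of the 2×2 minors of A, i.e. equal to {A_{2,i}·A_{1,j} : 1 ≤ i < j ≤ k}. -/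
noncomputable section

open MvPolynomial

/-!
Cut the cycle open at a vertex `v` of the sink. A connected set `S` avoiding `v` is then an arc
`(x, y]`, and the only edges leaving it are `(x, x + 1)` and `(y, y + 1)`, so
`x^{S → S̄} = X (x + 1) * X y`. Since the parts are connected, such an arc is a union of parts
exactly when both of these edges are relevant, and `x` comes before `y` in the traversal from `v`.
-/

section CyclePosition

variable {n : ℕ} {v x y z : Fin n}

/-- The number of steps from `v` to `x` along the directed cycle; it linearly orders the vertices
of the cycle cut open at `v`. -/
def cycPos (v x : Fin n) : ℕ := ((x - v : Fin n) : ℕ)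

theorem cycPos_lt (v x : Fin n) : cycPos v x < n := (x - v).isLt

/-- The arc `(x, y]` of the cycle cut open at `v`. It never contains `v`, and is empty unless `x`
comes before `y`. -/
def cycArc (v x y : Fin n) : Set (Fin n) := cycPos v ⁻¹' Set.Ioc (cycPos v x) (cycPos v y)

theorem mem_cycArc : z ∈ cycArc v x y ↔ cycPos v x < cycPos v z ∧ cycPos v z ≤ cycPos v y :=
  Iff.rfl

variable [NeZero n]

theorem cycPos_injective (v : Fin n) : Function.Injective (cycPos v) :=
  Fin.val_injective.comp sub_left_injective

theorem cycPos_self (v : Fin n) : cycPos v v = 0 := by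
  simp only [cycPos, sub_self, Fin.val_zero]

theorem cycPos_pos_iff : 0 < cycPos v x ↔ x ≠ v := by
  rw [Nat.pos_iff_ne_zero, ← cycPos_self v, (cycPos_injective v).ne_iff]

theorem cycPos_add_one (v x : Fin n) :
    cycPos v (x + 1) = if cycPos v x + 1 = n then 0 else cycPos v x + 1 := by
  have hmod : cycPos v (x + 1) = (cycPos v x + 1) % n := by
    rw [cycPos, add_sub_right_comm, Fin.val_add, Fin.val_one', Nat.add_mod_mod, cycPos]
  rw [hmod]
  split_ifs with h
  · rw [h, Nat.mod_self]
  · exact Nat.mod_eq_of_lt (by have := cycPos_lt v x; omega)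

theorem cycPos_sub_one (v x : Fin n) :
    cycPos v (x - 1) = if cycPos v x = 0 then n - 1 else cycPos v x - 1 := by
  have hsucc := cycPos_add_one v (x - 1)
  rw [sub_add_cancel] at hsucc
  split_ifs at * <;> omega

theorem base_notMem_cycArc (v x y : Fin n) : v ∉ cycArc v x y := fun h =>
  Nat.not_lt_zero _ (cycPos_self v ▸ h.1)

/-- The tails `x` of the directed edges `(x, x + 1)` joining `S` to its complement, in either
direction. -/
def edgeBoundary (S : Set (Fin n)) : Set (Fin n) := {x | ¬(x ∈ S ↔ x + 1 ∈ S)}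

theorem edgeBoundary_cycArc (hxy : cycPos v x < cycPos v y) :
    edgeBoundary (cycArc v x y) = {x, y} := by
  ext z
  have hy := cycPos_lt v y
  simp only [edgeBoundary, Set.mem_ofPred_eq, mem_cycArc, Set.mem_insert_iff,
    Set.mem_singleton_iff, ← (cycPos_injective v).eq_iff, cycPos_add_one]
  split_ifs <;> omega

theorem outVec_cycArc (hxy : cycPos v x < cycPos v y) (i : Fin n) :
    outVec n (cycArc v x y) i = (if i = x + 1 then 1 else 0) + (if i = y then 1 else 0) := by
  have hy := cycPos_lt v y
  have hi := cycPos_lt v i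
  simp only [outVec, mem_cycArc, ← (cycPos_injective v).eq_iff, cycPos_add_one, cycPos_sub_one]
  split_ifs <;> omega

theorem outMono_cycArc (K : Type*) [Field K] (hxy : cycPos v x < cycPos v y) :
    outMono n K (cycArc v x y) = X (x + 1) * X y := by
  simp only [outMono, outVec_cycArc hxy, pow_add, Finset.prod_mul_distrib, pow_ite, pow_one,
    pow_zero, Finset.prod_ite_eq', Finset.mem_univ, if_true]

end CyclePosition

section ConnectedSets

variable {n : ℕ} [NeZero n] {S : Set (Fin n)} {v x y z : Fin n}

theorem cycleG_adj : (cycleG n).Adj x y ↔ x ≠ y ∧ (y = x + 1 ∨ x = y + 1) :=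
  SimpleGraph.fromRel_adj _ x y

theorem mem_iff_of_preconnected_induce (hS : ((cycleG n).induce S).Preconnected)
    {P : Set (Fin n)} (hstep : ∀ z ∈ S, z + 1 ∈ S → (z ∈ P ↔ z + 1 ∈ P))
    (hx : x ∈ S) (hy : y ∈ S) : x ∈ P ↔ y ∈ P := by
  have hadj : ∀ a b : S, ((cycleG n).induce S).Adj a b → (a.1 ∈ P ↔ b.1 ∈ P) := by
    rintro ⟨a, ha⟩ ⟨b, hb⟩ hab
    obtain ⟨-, rfl | rfl⟩ := cycleG_adj.1 (SimpleGraph.induce_adj.1 hab)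
    exacts [hstep a ha hb, (hstep b hb ha).symm]
  suffices hwalk : ∀ a b : S, ((cycleG n).induce S).Walk a b → (a.1 ∈ P ↔ b.1 ∈ P) from
    (hS ⟨x, hx⟩ ⟨y, hy⟩).elim (hwalk _ _)
  intro a b w
  induction w with
  | nil => exact Iff.rfl
  | cons hab _ ih => exact (hadj _ _ hab).trans ih

theorem mem_of_cycPos_mem_Icc (hS : ((cycleG n).induce S).Preconnected) (hv : v ∉ S)
    (hx : x ∈ S) (hy : y ∈ S) (hz : cycPos v z ∈ Set.Icc (cycPos v x) (cycPos v y)) :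
    z ∈ S := by
  by_contra hzS
  have hne : ∀ u ∈ S, cycPos v u ≠ cycPos v z := fun u hu h =>
    hzS (cycPos_injective v h ▸ hu)
  have hstep : ∀ u ∈ S, u + 1 ∈ S →
      (u ∈ cycPos v ⁻¹' Set.Iio (cycPos v z) ↔ u + 1 ∈ cycPos v ⁻¹' Set.Iio (cycPos v z)) := by
    intro u _ hu1
    have hpos : 0 < cycPos v (u + 1) := cycPos_pos_iff.2 (ne_of_mem_of_not_mem hu1 hv)
    have hsucc := cycPos_add_one v u
    have hu1' := hne _ hu1
    simp only [Set.mem_preimage, Set.mem_Iio]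
    split_ifs at hsucc <;> omega
  have hxz : cycPos v x < cycPos v z := hz.1.lt_of_ne (hne x hx)
  exact hz.2.not_gt ((mem_iff_of_preconnected_induce hS hstep hx hy).1 hxz)

theorem exists_eq_cycArc (hS : ((cycleG n).induce S).Connected) (hv : v ∉ S) :
    ∃ x y, cycPos v x < cycPos v y ∧ S = cycArc v x y := by
  have hne : S.Nonempty := Set.nonempty_coe_sort.1 hS.nonempty
  obtain ⟨a, ha, hmin⟩ := Set.exists_min_image S (cycPos v) S.toFinite hne
  obtain ⟨b, hb, hmax⟩ := Set.exists_max_image S (cycPos v) S.toFinite hne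
  have hpos : 0 < cycPos v a := cycPos_pos_iff.2 (ne_of_mem_of_not_mem ha hv)
  have hpred : cycPos v (a - 1) + 1 = cycPos v a := by
    rw [cycPos_sub_one, if_neg hpos.ne']
    omega
  refine ⟨a - 1, b, ?_, Set.Subset.antisymm (fun z hz => ?_) fun z hz => ?_⟩
  · have := hmin b hb
    omega
  · exact ⟨by have := hmin z hz; omega, hmax z hz⟩
  · exact mem_of_cycPos_mem_Icc hS.preconnected hv ha hb ⟨by have := hz.1; omega, hz.2⟩

theorem connected_induce_cycArc (hxy : cycPos v x < cycPos v y) :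
    ((cycleG n).induce (cycArc v x y)).Connected := by
  rw [SimpleGraph.connected_iff_exists_forall_reachable]
  refine ⟨⟨y, hxy, le_rfl⟩, ?_⟩
  suffices h : ∀ d z (hz : z ∈ cycArc v x y), cycPos v z + d = cycPos v y →
      ((cycleG n).induce (cycArc v x y)).Reachable ⟨y, hxy, le_rfl⟩ ⟨z, hz⟩ from
    fun ⟨z, hz⟩ => h _ z hz (Nat.add_sub_of_le hz.2)
  intro d
  induction d with
  | zero =>
    intro z hz hd
    obtain rfl := cycPos_injective v hd
    exact SimpleGraph.Reachable.refl _
  | succ d ih =>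
    intro z hz hd
    have hsucc : cycPos v (z + 1) = cycPos v z + 1 := by
      rw [cycPos_add_one, if_neg (by have := cycPos_lt v y; omega)]
    have hz1 : z + 1 ∈ cycArc v x y := ⟨by have := hz.1; omega, by omega⟩
    have hne : z + 1 ≠ z := fun h => by rw [h] at hsucc; omega
    have hstep : ((cycleG n).induce (cycArc v x y)).Adj ⟨z + 1, hz1⟩ ⟨z, hz⟩ :=
      SimpleGraph.induce_adj.2 (cycleG_adj.2 ⟨hne, Or.inr rfl⟩)
    exact (ih (z + 1) hz1 (by omega)).trans hstep.reachable

end ConnectedSets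

section Parsets

open scoped Function

variable {n : ℕ} [NeZero n]

/-- The tails of the directed relevant edges of a family `V` of parts, i.e. the entries of the
first row of `A_{(C_n,Π)}`. -/
def relevantTails {ι : Type*} (V : ι → Set (Fin n)) : Set (Fin n) :=
  {x | ∃ j, x ∈ V j ∧ x + 1 ∉ V j}

theorem exists_eq_biUnion_iff_edgeBoundary_subset {ι : Type*} {V : ι → Set (Fin n)}
    (hcover : ∀ x, ∃ j, x ∈ V j) (hdisj : Pairwise (Disjoint on V))
    (hconn : ∀ j, ((cycleG n).induce (V j)).Preconnected) (S : Set (Fin n)) :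
    (∃ T : Set ι, S = ⋃ j ∈ T, V j) ↔ edgeBoundary S ⊆ relevantTails V := by
  have huniq : ∀ {x i j}, x ∈ V i → x ∈ V j → i = j := fun {x i j} hi hj =>
    hdisj.eq (Set.not_disjoint_iff.2 ⟨x, hi, hj⟩)
  constructor
  · rintro ⟨T, rfl⟩ x hx
    obtain ⟨j, hj⟩ := hcover x
    have hmem : ∀ y ∈ V j, y ∈ ⋃ i ∈ T, V i ↔ j ∈ T := by
      refine fun y hy => ⟨fun h => ?_, fun h => Set.mem_biUnion h hy⟩
      obtain ⟨i, hi, hyi⟩ := Set.mem_iUnion₂.1 h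
      exact huniq hyi hy ▸ hi
    exact ⟨j, hj, fun hj1 => hx ((hmem x hj).trans (hmem _ hj1).symm)⟩
  · intro hS
    have hstep : ∀ j, ∀ z ∈ V j, z + 1 ∈ V j → (z ∈ S ↔ z + 1 ∈ S) := by
      intro j z hz hz1
      by_contra hcross
      obtain ⟨i, hi, hi1⟩ := hS hcross
      exact hi1 (huniq hi hz ▸ hz1)
    refine ⟨{j | V j ⊆ S}, Set.Subset.antisymm (fun x hx => ?_) (Set.iUnion₂_subset fun _ => id)⟩
    obtain ⟨j, hj⟩ := hcover x
    have hjS : V j ⊆ S := fun y hy =>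
      (mem_iff_of_preconnected_induce (hconn j) (hstep j) hj hy).1 hx
    exact Set.mem_biUnion hjS hj

variable {k : ℕ} {V : Fin k → Set (Fin n)} {s : Fin k} {v : Fin n}

theorem isConnParset_and_not_subset_iff (hcover : ∀ x, ∃ j, x ∈ V j)
    (hdisj : Pairwise (Disjoint on V))
    (hconn : ∀ j, ((cycleG n).induce (V j)).Preconnected) (hv : v ∈ V s) (S : Set (Fin n)) :
    isConnParset n k V S ∧ ¬ V s ⊆ S ↔
      ∃ x ∈ relevantTails V, ∃ y ∈ relevantTails V,
        cycPos v x < cycPos v y ∧ S = cycArc v x y := by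
  have hparset := exists_eq_biUnion_iff_edgeBoundary_subset hcover hdisj hconn
  constructor
  · rintro ⟨⟨⟨T, hT⟩, hSconn⟩, hsink⟩
    have hvS : v ∉ S := by
      rw [hT, Set.mem_iUnion₂]
      rintro ⟨j, hj, hvj⟩
      obtain rfl : j = s := hdisj.eq (Set.not_disjoint_iff.2 ⟨v, hvj, hv⟩)
      exact hsink (hT ▸ Set.subset_biUnion_of_mem hj)
    obtain ⟨x, y, hxy, rfl⟩ := exists_eq_cycArc hSconn hvS
    have hbd := (hparset _).1 ⟨T, hT⟩
    rw [edgeBoundary_cycArc hxy, Set.pair_subset_iff] at hbd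
    exact ⟨x, hbd.1, y, hbd.2, hxy, rfl⟩
  · rintro ⟨x, hx, y, hy, hxy, rfl⟩
    have hbd : edgeBoundary (cycArc v x y) ⊆ relevantTails V := by
      rw [edgeBoundary_cycArc hxy]
      exact Set.pair_subset hx hy
    exact ⟨⟨(hparset _).2 hbd, connected_induce_cycArc hxy⟩,
      fun h => base_notMem_cycArc v x y (h hv)⟩

theorem statement_5_general (K : Type*) [Field K] {ι : Type*} [LinearOrder ι]
    (hcover : ∀ x, ∃ j, x ∈ V j) (hdisj : Pairwise (Disjoint on V))
    (hconn : ∀ j, ((cycleG n).induce (V j)).Preconnected) (p q : ι → Fin n)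
    (hpq : ∀ c, q c = p c + 1) (hcross : ∀ c j, p c ∈ V j → q c ∉ V j)
    (hall : ∀ x, (∃ j, x ∈ V j ∧ x + 1 ∉ V j) → ∃ c, p c = x)
    (hv : v ∈ V s) (hmono : StrictMono fun c => ((p c - v : Fin n) : ℕ)) :
    { f : MvPolynomial (Fin n) K | ∃ S : Set (Fin n),
        isConnParset n k V S ∧ ¬ V s ⊆ S ∧ f = outMono n K S }
      = { f : MvPolynomial (Fin n) K | ∃ c₁ c₂ : ι, c₁ < c₂ ∧
          f = X (q c₁) * X (p c₂) } := by
  have harc := isConnParset_and_not_subset_iff hcover hdisj hconn hv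
  have hrel : ∀ c, p c ∈ relevantTails V := fun c =>
    (hcover (p c)).imp fun j hj => ⟨hj, hpq c ▸ hcross c j hj⟩
  ext f
  constructor
  · rintro ⟨S, hS, hsink, rfl⟩
    obtain ⟨x, hx, y, hy, hxy, rfl⟩ := (harc S).1 ⟨hS, hsink⟩
    obtain ⟨c₁, rfl⟩ := hall x hx
    obtain ⟨c₂, rfl⟩ := hall y hy
    exact ⟨c₁, c₂, hmono.lt_iff_lt.1 hxy, hpq c₁ ▸ outMono_cycArc K hxy⟩
  · rintro ⟨c₁, c₂, hlt, rfl⟩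
    have hxy : cycPos v (p c₁) < cycPos v (p c₂) := hmono hlt
    obtain ⟨hS, hsink⟩ := (harc _).2 ⟨p c₁, hrel c₁, p c₂, hrel c₂, hxy, rfl⟩
    exact ⟨_, hS, hsink, hpq c₁ ▸ (outMono_cycArc K hxy).symm⟩

end Parsets

/-- For a parcycle `(C_n, Π)` with matrix `A = A_{(C_n,Π)}` (columns the
directed relevant edges `(p_i, q_i)` in traversal order), the set of monomials `x^{S→S̄}`
over connected-parsets `S` avoiding the sink equals the set of anti-diagonals
`A₂ᵢ · A₁ⱼ` (`i < j`) of the `2 × 2` minors of `A`. -/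
theorem statement_5 (K : Type*) [Field K] (n k : ℕ) [NeZero n] (hn : 3 ≤ n) (hk : 2 ≤ k)
    (V : Fin k → Set (Fin n))
    (hcover : ∀ x : Fin n, ∃ j, x ∈ V j)
    (hdisj : ∀ j₁ j₂ : Fin k, j₁ ≠ j₂ → Disjoint (V j₁) (V j₂))
    (hconn : ∀ j, ((cycleG n).induce (V j)).Connected)
    (hsink : (⟨n - 1, by omega⟩ : Fin n) ∈ V ⟨k - 1, by omega⟩)
    (p q : Fin k → Fin n)
    (hpq : ∀ c, q c = p c + 1)
    (hcross : ∀ c j, p c ∈ V j → q c ∉ V j)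
    (hall : ∀ x : Fin n, (∃ j, x ∈ V j ∧ x + 1 ∉ V j) → ∃ c, p c = x)
    (hinjp : Function.Injective p)
    (horder : ∃ v₀, v₀ ∈ V ⟨k - 1, by omega⟩ ∧
      StrictMono fun c : Fin k => ((p c - v₀ : Fin n) : ℕ)) :
    { f : MvPolynomial (Fin n) K | ∃ S : Set (Fin n),
        isConnParset n k V S ∧ ¬ V ⟨k - 1, by omega⟩ ⊆ S ∧ f = outMono n K S }
      = { f : MvPolynomial (Fin n) K | ∃ c₁ c₂ : Fin k, c₁ < c₂ ∧
          f = X (q c₁) * X (p c₂) } := by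
  obtain ⟨v, hv, hmono⟩ := horder
  exact statement_5_general K hcover hdisj (fun j => (hconn j).preconnected) p q hpq hcross hall
    hv hmono
end
end

section
/- Let (C_n,Π) be a parcycle with Π = {V_1,…,V_k} and sink V_k, and let λ ∈ ℕ^n be a weight vector satisfying λ·b_{V_i} > 0 for all i = 1,…,k−1. Then the λ-initial ideal of the toppling ideal equals the G-parking function ideal: in_λ(I_Π) = M_Π. -/
noncomputable section

open MvPolynomial

/-!
Every vector of `L_Π` is the effect `firing c` of firing each part `V_j` some number `c j` of times,
and `firing c` has `i`-th entry `∑ (c i - c l)` over the neighbours `l` of `i`.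

`in_λ(I_Π) ⊆ M_Π`: the ideal `I_Π` is homogeneous for the grading by `ℤ^n / L_Π`, so for an exponent
`u` of maximal weight in `f ∈ I_Π` there is another exponent `v` of `f` with `u - v = firing c`.
Since `λ · firing c ≥ 0`, positivity of `λ` on the generators forces `c` to exceed its value at the
sink somewhere. Hence the parts where `c` is maximal avoid the sink. If `S` is a connected component
of their union, each edge leaving `S` at `i` contributes at least `1` to `(firing c)_i ≤ u_i`, while
no edge at `i` contributes a negative amount; so `x^{S → S̄}` divides `x^u`.

`M_Π ⊆ in_λ(I_Π)`: the difference of the exponents of `x^{S → S̄} - x^{S̄ → S}` is the firing of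
the indicator of `S`, which has positive weight, so the first term is the initial form.
-/

open Matrix

section Firing

variable {V κ : Type*}

/-- The number of edges of the graph `G` leaving the set `S` at the vertex `i`, with value `0`
for `i ∉ S`: the exponent of `x_i` in the monomial `x^{S → S̄}`. -/
def outDegree (G : SimpleGraph V) [G.LocallyFinite] (S : Set V) (i : V) : ℕ :=
  open Classical in Finset.card {l ∈ G.neighborFinset i | i ∈ S ∧ l ∉ S}

variable [Fintype V] [DecidableEq V] {G : SimpleGraph V} [DecidableRel G.Adj] {p : V → κ}

variable (G p) in
/-- The chip-firing map of the graph `G` whose vertices are partitioned into the fibres of `p`: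
`firing G p c` is the Laplacian of `G` applied to `c ∘ p`, that is, the number of chips each
vertex loses when all vertices of each part `p ⁻¹' {j}` fire `c j` times. Its range is the lattice
`L_Π`, and `firing G p (Pi.single j 1)` is the generator `b_{V_j}`. -/
def firing : (κ → ℤ) →ₗ[ℤ] V → ℤ :=
  (G.lapMatrix ℤ).mulVecLin ∘ₗ LinearMap.funLeft ℤ ℤ p

theorem firing_apply (c : κ → ℤ) (i : V) :
    firing G p c i = ∑ l ∈ G.neighborFinset i, (c (p i) - c (p l)) := by
  simp [firing, LinearMap.funLeft, SimpleGraph.lapMatrix_mulVec_apply, Finset.sum_sub_distrib]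

theorem firing_sub_const (c : κ → ℤ) (a : ℤ) : firing G p (fun j ↦ c j - a) = firing G p c := by
  ext i
  simp only [firing_apply, sub_sub_sub_cancel_right]

theorem firing_indicator (T : Set κ) (i : V) :
    firing G p (T.indicator 1) i = outDegree G (p ⁻¹' T) i - outDegree G (p ⁻¹' T)ᶜ i := by
  classical
  simp only [firing_apply, outDegree, Finset.card_filter, Nat.cast_sum, ← Finset.sum_sub_distrib]
  refine Finset.sum_congr rfl fun l _ ↦ ?_
  by_cases hi : p i ∈ T <;> by_cases hl : p l ∈ T <;> simp [hi, hl]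

theorem dotProduct_firing [Fintype κ] [DecidableEq κ] (w : V → ℤ) (c : κ → ℤ) :
    w ⬝ᵥ firing G p c = ∑ j, c j * (w ⬝ᵥ firing G p (Pi.single j 1)) := by
  have hc : c = ∑ j, c j • Pi.single j 1 := by
    simp [← Pi.single_smul, Finset.univ_sum_single]
  conv_lhs => rw [hc]
  simp only [map_sum, map_smul, dotProduct_sum, dotProduct_smul, smul_eq_mul]

theorem dotProduct_firing_indicator_pos [Finite κ] [DecidableEq κ] {w : V → ℤ} {T : Set κ}
    (hw : ∀ j ∈ T, 0 < w ⬝ᵥ firing G p (Pi.single j 1)) (hT : T.Nonempty) :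
    0 < w ⬝ᵥ firing G p (T.indicator 1) := by
  classical
  have := Fintype.ofFinite κ
  obtain ⟨j, hj⟩ := hT
  rw [dotProduct_firing]
  refine Finset.sum_pos' (fun i _ ↦ ?_) ⟨j, Finset.mem_univ j, by simpa [hj] using hw j hj⟩
  by_cases hi : i ∈ T
  · simpa [hi] using (hw i hi).le
  · simp [hi]

theorem exists_lt_of_dotProduct_firing_nonneg [Finite κ] [DecidableEq κ] {w : V → ℤ} {s : κ}
    (hw : ∀ j ≠ s, 0 < w ⬝ᵥ firing G p (Pi.single j 1)) {c : κ → ℤ} (hc : firing G p c ≠ 0)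
    (hnonneg : 0 ≤ w ⬝ᵥ firing G p c) : ∃ j, c s < c j := by
  have := Fintype.ofFinite κ
  by_contra! hle
  rw [← firing_sub_const c (c s), dotProduct_firing] at hnonneg
  have hterm : ∀ j ∈ Finset.univ, (c j - c s) * (w ⬝ᵥ firing G p (Pi.single j 1)) ≤ 0 := by
    intro j _
    obtain rfl | hj := eq_or_ne j s
    · simp
    · exact mul_nonpos_of_nonpos_of_nonneg (sub_nonpos.2 (hle j)) (hw j hj).le
  have hzero := (Finset.sum_eq_zero_iff_of_nonpos hterm).1
    ((Finset.sum_nonpos hterm).antisymm hnonneg)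
  have hconst : ∀ j, c j = c s := fun j ↦ by
    obtain rfl | hj := eq_or_ne j s
    · rfl
    · have hmul := mul_eq_zero.1 (hzero j (Finset.mem_univ j))
      exact sub_eq_zero.1 (hmul.resolve_right (hw j hj).ne')
  exact hc (by ext i; simp [firing_apply, hconst])

theorem outDegree_le_max_firing {c : κ → ℤ} {T : Set κ} {i : V}
    (hle : ∀ l, p i ∈ T → G.Adj i l → c (p l) ≤ c (p i))
    (hlt : ∀ l, p i ∈ T → G.Adj i l → p l ∉ T → c (p l) < c (p i)) :
    (outDegree G (p ⁻¹' T) i : ℤ) ≤ max (firing G p c i) 0 := by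
  classical
  by_cases hi : p i ∈ T
  · refine le_max_of_le_left ?_
    simp only [firing_apply, outDegree, Finset.card_filter, Nat.cast_sum]
    refine Finset.sum_le_sum fun l hl ↦ ?_
    rw [SimpleGraph.mem_neighborFinset] at hl
    by_cases hlT : p l ∈ T
    · simpa [hlT] using hle l hi hl
    · have := hlt l hi hl hlT
      simpa [hi, hlT] using Order.one_le_iff_pos.2 (sub_pos.2 this)
  · simp [outDegree, hi]

end Firing

section Connected

variable {V κ : Type*} [Finite κ]

theorem exists_connected_subset_of_connected_fibers {G : SimpleGraph V} {p : V → κ}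
    {T : Set κ} (hconn : ∀ j ∈ T, (G.induce (p ⁻¹' {j})).Connected) (hT : T.Nonempty) :
    ∃ T' ⊆ T, (G.induce (p ⁻¹' T')).Connected ∧
      ∀ i l, G.Adj i l → p i ∈ T' → p l ∈ T → p l ∈ T' := by
  obtain ⟨j, hj⟩ := hT
  have hne : {T' : Set κ | T' ⊆ T ∧ (G.induce (p ⁻¹' T')).Connected}.Nonempty :=
    ⟨{j}, Set.singleton_subset_iff.2 hj, hconn j hj⟩
  obtain ⟨T', ⟨hsub, hT'⟩, hmax⟩ := (Set.toFinite _).exists_maximal hne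
  refine ⟨T', hsub, hT', fun i l hil hi hl ↦ ?_⟩
  have hunion : (G.induce (p ⁻¹' T' ∪ p ⁻¹' {p l})).Connected :=
    SimpleGraph.connected_induce_union hT'.preconnected (hconn _ hl).preconnected hi rfl hil
  rw [← Set.preimage_union] at hunion
  exact hmax ⟨Set.union_subset hsub (Set.singleton_subset_iff.2 hl), hunion⟩
    Set.subset_union_left (Or.inr rfl)

theorem exists_connected_outDegree_le_max_firing [Fintype V] [DecidableEq V]
    {G : SimpleGraph V} [DecidableRel G.Adj] {p : V → κ} {s j : κ}
    (hconn : ∀ j ≠ s, (G.induce (p ⁻¹' {j})).Connected) {c : κ → ℤ} (hlt : c s < c j) :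
    ∃ T : Set κ, (G.induce (p ⁻¹' T)).Connected ∧ s ∉ T ∧
      ∀ i, (outDegree G (p ⁻¹' T) i : ℤ) ≤ max (firing G p c i) 0 := by
  have : Nonempty κ := ⟨s⟩
  obtain ⟨m, hm⟩ := Finite.exists_max c
  have hs : c s ≠ c m := (hlt.trans_le (hm j)).ne
  obtain ⟨T, hsub, hT, hclosed⟩ :=
    exists_connected_subset_of_connected_fibers (T := {j | c j = c m})
      (fun j hj ↦ hconn j fun h ↦ hs (h ▸ hj)) ⟨m, rfl⟩
  refine ⟨T, hT, fun h ↦ hs (hsub h), fun i ↦ outDegree_le_max_firing (fun l hi _ ↦ ?_)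
    fun l hi hil hl ↦ ?_⟩
  · exact (hm (p l)).trans_eq (hsub hi).symm
  · exact ((hm (p l)).lt_of_ne fun h ↦ hl (hclosed i l hil hi h)).trans_eq (hsub hi).symm

end Connected

section LatticeIdeal

variable {σ : Type*}

theorem prod_X_pow_eq_monomial_equivFunOnFinite {R : Type*} [CommSemiring R] [Fintype σ]
    (u : σ → ℕ) :
    (∏ i, X i ^ u i : MvPolynomial σ R) = monomial (Finsupp.equivFunOnFinite.symm u) 1 := by
  simp [monomial_eq, Finsupp.prod_fintype]

/-- The degree of an exponent vector in the grading of the polynomial ring by the group `ℤ^σ / L`,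
for which the lattice ideal of `L` is homogeneous. -/
def latticeDegree (L : Submodule ℤ (σ → ℤ)) : (σ →₀ ℕ) →+ (σ → ℤ) ⧸ L where
  toFun u := L.mkQ fun i ↦ (u i : ℤ)
  map_zero' := (congrArg L.mkQ (by ext; simp)).trans (map_zero L.mkQ)
  map_add' u v := (congrArg L.mkQ (by ext; simp)).trans (map_add L.mkQ _ _)

theorem latticeDegree_eq_iff {L : Submodule ℤ (σ → ℤ)} {u v : σ →₀ ℕ} :
    latticeDegree L u = latticeDegree L v ↔
      ((fun i ↦ (u i : ℤ)) - fun i ↦ (v i : ℤ)) ∈ L :=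
  Submodule.Quotient.eq L

variable {K : Type*} [Field K] {n : ℕ} {L : Submodule ℤ (Fin n → ℤ)}

theorem monomial_sub_monomial_mem_latticeIdeal {u v : Fin n →₀ ℕ}
    (h : latticeDegree L u = latticeDegree L v) :
    (monomial u 1 - monomial v 1 : MvPolynomial (Fin n) K) ∈ latticeIdeal n K L :=
  Ideal.subset_span ⟨u, v, latticeDegree_eq_iff.1 h, by
    simp [prod_X_pow_eq_monomial_equivFunOnFinite]⟩

theorem mapDomainRingHom_monomial {R M : Type*} [CommSemiring R] [AddMonoid M]
    (φ : (σ →₀ ℕ) →+ M) (u : σ →₀ ℕ) (a : R) :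
    AddMonoidAlgebra.mapDomainRingHom R φ (monomial u a) = AddMonoidAlgebra.single (φ u) a :=
  AddMonoidAlgebra.mapDomain_single

theorem mapDomainRingHom_latticeDegree_eq_zero {f : MvPolynomial (Fin n) K}
    (hf : f ∈ latticeIdeal n K L) :
    AddMonoidAlgebra.mapDomainRingHom K (latticeDegree L) f = 0 := by
  suffices latticeIdeal n K L ≤
      RingHom.ker (AddMonoidAlgebra.mapDomainRingHom K (latticeDegree L)) from this hf
  refine Ideal.span_le.2 ?_
  rintro _ ⟨u, v, huv, rfl⟩
  have hdeg : latticeDegree L (Finsupp.equivFunOnFinite.symm u) =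
      latticeDegree L (Finsupp.equivFunOnFinite.symm v) := latticeDegree_eq_iff.2 huv
  rw [SetLike.mem_coe, RingHom.mem_ker, map_sub, prod_X_pow_eq_monomial_equivFunOnFinite,
    prod_X_pow_eq_monomial_equivFunOnFinite, mapDomainRingHom_monomial, mapDomainRingHom_monomial,
    hdeg, sub_self]

theorem exists_mem_support_latticeDegree_eq {f : MvPolynomial (Fin n) K}
    (hf : f ∈ latticeIdeal n K L) {u : Fin n →₀ ℕ} (hu : u ∈ f.support) :
    ∃ v ∈ f.support, v ≠ u ∧ latticeDegree L u = latticeDegree L v := by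
  by_contra! h
  have hzero := mapDomainRingHom_latticeDegree_eq_zero hf
  rw [f.as_sum, map_sum] at hzero
  have hcoeff := congrArg (fun z ↦ z.coeff (latticeDegree L u)) hzero
  simp only [mapDomainRingHom_monomial, AddMonoidAlgebra.coeff_sum,
    Finsupp.finsetSum_apply] at hcoeff
  rw [Finset.sum_eq_single_of_mem u hu fun v hv hvu ↦ by
    simp [(h v hv hvu).symm]] at hcoeff
  exact mem_support_iff.1 hu (by simpa using hcoeff)

variable {lam : Fin n → ℕ}

theorem initForm_monomial_sub_monomial {u v : Fin n →₀ ℕ} (h : wdeg n lam v < wdeg n lam u) :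
    initForm n K lam (monomial u 1 - monomial v 1) = monomial u 1 := by
  classical
  have huv : u ≠ v := fun huv ↦ h.ne' (by rw [huv])
  have hsupp : (monomial u 1 - monomial v 1 : MvPolynomial (Fin n) K).support = {u, v} := by
    ext x
    by_cases hu : u = x <;> by_cases hv : v = x <;>
      simp_all [mem_support_iff, coeff_monomial, eq_comm]
  have hfilter : ({u, v} : Finset (Fin n →₀ ℕ)).filter
      (fun x ↦ wdeg n lam x = wdeg n lam u) = {u} := by
    simp [Finset.filter_insert, Finset.filter_singleton, h.ne]
  have hsup : ({u, v} : Finset (Fin n →₀ ℕ)).sup (wdeg n lam) = wdeg n lam u := by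
    simp [h.le]
  rw [initForm, hsupp, hsup, hfilter]
  simp [coeff_monomial, huv.symm]

theorem monomial_mem_initIdeal_latticeIdeal {u v : Fin n →₀ ℕ}
    (hdeg : latticeDegree L u = latticeDegree L v) (hlt : wdeg n lam v < wdeg n lam u) :
    monomial u 1 ∈ initIdeal n K lam (latticeIdeal n K L) := by
  refine Ideal.subset_span ⟨_, monomial_sub_monomial_mem_latticeIdeal hdeg, fun h ↦ ?_,
    (initForm_monomial_sub_monomial hlt).symm⟩
  rw [sub_eq_zero, monomial_left_inj one_ne_zero] at h
  exact hlt.ne (by rw [h])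

theorem initIdeal_latticeIdeal_le {J : Ideal (MvPolynomial (Fin n) K)}
    (hJ : ∀ u v, v ≠ u → latticeDegree L u = latticeDegree L v → wdeg n lam v ≤ wdeg n lam u →
      monomial u 1 ∈ J) :
    initIdeal n K lam (latticeIdeal n K L) ≤ J := by
  refine Ideal.span_le.2 ?_
  rintro _ ⟨f, hf, -, rfl⟩
  refine Ideal.sum_mem _ fun u hu ↦ ?_
  obtain ⟨husupp, hmax⟩ := Finset.mem_filter.1 hu
  obtain ⟨v, hv, hvu, hdeg⟩ := exists_mem_support_latticeDegree_eq hf husupp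
  have hmem := hJ u v hvu hdeg (hmax ▸ Finset.le_sup hv)
  simpa [C_mul_monomial] using J.mul_mem_left (C (coeff u f)) hmem

theorem cast_wdeg_sub_cast_wdeg (u v : Fin n →₀ ℕ) :
    (wdeg n lam u : ℤ) - wdeg n lam v =
      (fun i ↦ (lam i : ℤ)) ⬝ᵥ ((fun i ↦ (u i : ℤ)) - fun i ↦ (v i : ℤ)) := by
  simp [wdeg, dotProduct, mul_sub]

end LatticeIdeal

section ParkingIdeal

variable {V κ : Type*} [Fintype V] (K : Type*) [Field K]

/-- The `G`-parking function ideal of the graph `G` with vertices partitioned into the fibres of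
`p`, where the sink is the part `p ⁻¹' {s}`. -/
def parkingIdeal (G : SimpleGraph V) [DecidableRel G.Adj] (p : V → κ) (s : κ) :
    Ideal (MvPolynomial V K) :=
  Ideal.span {f | ∃ T : Set κ, (G.induce (p ⁻¹' T)).Connected ∧ s ∉ T ∧
    f = ∏ i, X i ^ outDegree G (p ⁻¹' T) i}

variable {K}

theorem monomial_mem_parkingIdeal {G : SimpleGraph V} [DecidableRel G.Adj] {p : V → κ} {s : κ}
    {T : Set κ} (hT : (G.induce (p ⁻¹' T)).Connected) (hs : s ∉ T) {u : V →₀ ℕ}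
    (hle : ∀ i, outDegree G (p ⁻¹' T) i ≤ u i) : monomial u 1 ∈ parkingIdeal K G p s := by
  refine Ideal.mem_of_dvd _ ?_ (Ideal.subset_span ⟨T, hT, hs, rfl⟩)
  rw [prod_X_pow_eq_monomial_equivFunOnFinite, monomial_dvd_monomial]
  exact ⟨Or.inr hle, dvd_rfl⟩

end ParkingIdeal

section GeneralGraph

variable {κ : Type*} [Finite κ] [DecidableEq κ] {K : Type*} [Field K] {n : ℕ}
  {G : SimpleGraph (Fin n)} [DecidableRel G.Adj] {p : Fin n → κ} {s : κ} {lam : Fin n → ℕ}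

theorem initIdeal_latticeIdeal_le_parkingIdeal
    (hconn : ∀ j ≠ s, (G.induce (p ⁻¹' {j})).Connected)
    (hlam : ∀ j ≠ s, 0 < (fun i ↦ (lam i : ℤ)) ⬝ᵥ firing G p (Pi.single j 1)) :
    initIdeal n K lam (latticeIdeal n K (LinearMap.range (firing G p))) ≤
      parkingIdeal K G p s := by
  refine initIdeal_latticeIdeal_le fun u v hvu hdeg hle ↦ ?_
  obtain ⟨c, hc⟩ := latticeDegree_eq_iff.1 hdeg
  have hne : firing G p c ≠ 0 := fun h ↦ hvu <| Finsupp.ext fun i ↦ by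
    have hi : (u i : ℤ) - v i = 0 := congrFun (hc.symm.trans h) i
    omega
  have hnonneg : 0 ≤ (fun i ↦ (lam i : ℤ)) ⬝ᵥ firing G p c := by
    rw [hc, ← cast_wdeg_sub_cast_wdeg, sub_nonneg]
    exact_mod_cast hle
  obtain ⟨j, hj⟩ := exists_lt_of_dotProduct_firing_nonneg hlam hne hnonneg
  obtain ⟨T, hT, hs, hout⟩ := exists_connected_outDegree_le_max_firing hconn hj
  refine monomial_mem_parkingIdeal hT hs fun i ↦ ?_
  have hi := hout i
  simp only [hc, Pi.sub_apply] at hi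
  omega

theorem parkingIdeal_le_initIdeal_latticeIdeal
    (hlam : ∀ j ≠ s, 0 < (fun i ↦ (lam i : ℤ)) ⬝ᵥ firing G p (Pi.single j 1)) :
    parkingIdeal K G p s ≤
      initIdeal n K lam (latticeIdeal n K (LinearMap.range (firing G p))) := by
  refine Ideal.span_le.2 ?_
  rintro _ ⟨T, hT, hs, rfl⟩
  have hTne : T.Nonempty := hT.nonempty.elim fun i ↦ ⟨p i, i.2⟩
  have hpos := dotProduct_firing_indicator_pos (fun j hj ↦ hlam j (ne_of_mem_of_not_mem hj hs)) hTne
  have hdiff := funext (firing_indicator (G := G) (p := p) T)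
  rw [prod_X_pow_eq_monomial_equivFunOnFinite]
  refine monomial_mem_initIdeal_latticeIdeal
    (v := Finsupp.equivFunOnFinite.symm (outDegree G (p ⁻¹' T)ᶜ)) ?_ ?_
  · exact latticeDegree_eq_iff.2 ⟨T.indicator 1, hdiff⟩
  · rw [← Nat.cast_lt (α := ℤ), ← sub_pos, cast_wdeg_sub_cast_wdeg]
    exact hpos.trans_eq (congrArg _ hdiff)

end GeneralGraph

section Cycle

variable {n : ℕ} [NeZero n]

theorem sub_one_ne_add_one (hn : 3 ≤ n) (i : Fin n) : i - 1 ≠ i + 1 := by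
  obtain ⟨m, rfl⟩ := Nat.exists_eq_add_of_le' hn
  rw [Ne, sub_eq_iff_eq_add, add_assoc, left_eq_add]
  exact ne_of_beq_false rfl

theorem cycleG_eq_cycleGraph : cycleG n = SimpleGraph.cycleGraph n := by
  obtain ⟨m, rfl⟩ := Nat.exists_eq_succ_of_ne_zero (NeZero.ne n)
  rw [SimpleGraph.cycleGraph_eq_circulantGraph]
  ext i j
  simp [cycleG, sub_eq_iff_eq_add', or_comm]

theorem neighborFinset_cycleG (hn : 2 ≤ n) [DecidableRel (cycleG n).Adj] (i : Fin n) :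
    (cycleG n).neighborFinset i = {i - 1, i + 1} := by
  obtain ⟨m, rfl⟩ := Nat.exists_eq_add_of_le' hn
  rw [← SimpleGraph.cycleGraph_neighborFinset]
  ext j
  simp [cycleG_eq_cycleGraph]

theorem outVec_eq_outDegree (hn : 3 ≤ n) [DecidableRel (cycleG n).Adj] (S : Set (Fin n)) :
    outVec n S = outDegree (cycleG n) S := by
  ext i
  by_cases hi : i ∈ S <;> by_cases hsub : i - 1 ∈ S <;> by_cases hadd : i + 1 ∈ S <;>
    simp [outVec, outDegree, neighborFinset_cycleG (Nat.le_of_succ_le hn), hi, hsub, hadd,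
      Finset.filter_insert, Finset.filter_singleton, sub_one_ne_add_one hn]

theorem cycLap_eq_lapMatrix (hn : 3 ≤ n) [DecidableRel (cycleG n).Adj] (i j : Fin n) :
    cycLap n j i = (cycleG n).lapMatrix ℤ i j := by
  have hdeg : (cycleG n).degree i = 2 := by
    rw [SimpleGraph.degree, neighborFinset_cycleG (Nat.le_of_succ_le hn),
      Finset.card_pair (sub_one_ne_add_one hn i)]
  obtain rfl | hij := eq_or_ne i j
  · simp [cycLap, SimpleGraph.lapMatrix, SimpleGraph.degMatrix, hdeg]
  · have hadj : (cycleG n).Adj i j ↔ i = j + 1 ∨ j = i + 1 := by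
      simp [cycleG, hij, or_comm]
    by_cases h : (cycleG n).Adj i j <;>
      simp [cycLap, SimpleGraph.lapMatrix, SimpleGraph.degMatrix, hij, ← hadj, h]

theorem bPart_preimage_singleton {κ : Type*} [DecidableEq κ] (hn : 3 ≤ n)
    [DecidableRel (cycleG n).Adj] (p : Fin n → κ) (j : κ) :
    bPart n (p ⁻¹' {j}) = firing (cycleG n) p (Pi.single j 1) := by
  ext i
  simp only [bPart, firing, Finset.sum_apply]
  simp [LinearMap.funLeft, mulVec, dotProduct, Pi.single_apply, ite_apply, cycLap_eq_lapMatrix hn]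

theorem topplingPar_preimage_singleton {k : ℕ} (K : Type*) [Field K] (hn : 3 ≤ n)
    [DecidableRel (cycleG n).Adj] (p : Fin n → Fin k) :
    topplingPar n k K (fun j ↦ p ⁻¹' {j}) =
      latticeIdeal n K (LinearMap.range (firing (cycleG n) p)) := by
  rw [topplingPar, LinearMap.range_eq_map, ← (Pi.basisFun ℤ (Fin k)).span_eq, Submodule.map_span,
    ← Set.range_comp]
  simp [Function.comp_def, bPart_preimage_singleton hn]

theorem gparkIdeal_preimage_singleton {k : ℕ} (K : Type*) [Field K] (hn : 3 ≤ n)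
    [DecidableRel (cycleG n).Adj] {p : Fin n → Fin k} {s : Fin k} (hs : (p ⁻¹' {s}).Nonempty) :
    gparkIdeal n k K (fun j ↦ p ⁻¹' {j}) s = parkingIdeal K (cycleG n) p s := by
  have hsub (T : Set (Fin k)) : ¬ p ⁻¹' {s} ⊆ p ⁻¹' T ↔ s ∉ T := by
    obtain ⟨i, rfl⟩ := hs
    exact not_congr ⟨fun h ↦ h rfl, fun h x hx ↦ by rwa [Set.mem_preimage, hx]⟩
  refine congrArg Ideal.span (Set.ext fun f ↦ ?_)
  simp [isConnParset, outMono, outVec_eq_outDegree hn, hsub, Set.biUnion_preimage_singleton]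

end Cycle

theorem exists_eq_preimage_singleton {V κ : Type*} {S : κ → Set V} (hcover : ∀ x, ∃ j, x ∈ S j)
    (hdisj : ∀ j₁ j₂, j₁ ≠ j₂ → Disjoint (S j₁) (S j₂)) :
    ∃ p : V → κ, S = fun j ↦ p ⁻¹' {j} := by
  choose p hp using hcover
  refine ⟨p, funext fun j ↦ Set.ext fun x ↦ ⟨fun hx ↦ ?_, ?_⟩⟩
  · by_contra hne
    exact Set.disjoint_left.1 (hdisj _ _ hne) (hp x) hx
  · rintro rfl
    exact hp x

theorem statement_7_general (K : Type*) [Field K] {n : ℕ} {κ : Type*} [Finite κ]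
    [DecidableEq κ] (G : SimpleGraph (Fin n)) [DecidableRel G.Adj] (p : Fin n → κ) (s : κ)
    (hconn : ∀ j ≠ s, (G.induce (p ⁻¹' {j})).Connected) (lam : Fin n → ℕ)
    (hlam : ∀ j ≠ s, 0 < (fun i ↦ (lam i : ℤ)) ⬝ᵥ firing G p (Pi.single j 1)) :
    initIdeal n K lam (latticeIdeal n K (LinearMap.range (firing G p))) =
      parkingIdeal K G p s :=
  (initIdeal_latticeIdeal_le_parkingIdeal hconn hlam).antisymm
    (parkingIdeal_le_initIdeal_latticeIdeal hlam)

/-- For a parcycle `(C_n, Π)` with sink `V_k` and a weight vector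
`λ ∈ ℕ^n` with `λ · b_{V_i} > 0` for `i = 1, …, k-1`, the `λ`-initial ideal of the
toppling ideal equals the `G`-parking function ideal: `in_λ(I_Π) = M_Π`. -/
theorem statement_7 (K : Type*) [Field K] (n k : ℕ) [NeZero n] (hn : 3 ≤ n) (hk : 1 ≤ k)
    (V : Fin k → Set (Fin n))
    (hcover : ∀ x : Fin n, ∃ j, x ∈ V j)
    (hdisj : ∀ j₁ j₂ : Fin k, j₁ ≠ j₂ → Disjoint (V j₁) (V j₂))
    (hconn : ∀ j, ((cycleG n).induce (V j)).Connected)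
    (hsink : (⟨n - 1, by omega⟩ : Fin n) ∈ V ⟨k - 1, by omega⟩)
    (lam : Fin n → ℕ)
    (hlam : ∀ j : Fin k, (j : ℕ) < k - 1 → 0 < ∑ l, (lam l : ℤ) * bPart n (V j) l) :
    initIdeal n K lam (topplingPar n k K V)
      = gparkIdeal n k K V ⟨k - 1, by omega⟩ := by
  classical
  obtain ⟨p, rfl⟩ := exists_eq_preimage_singleton hcover hdisj
  rw [topplingPar_preimage_singleton K hn, gparkIdeal_preimage_singleton K hn ⟨_, hsink⟩]
  refine statement_7_general K (cycleG n) p _ (fun j _ ↦ hconn j) lam fun j hj ↦ ?_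
  rw [← bPart_preimage_singleton hn]
  have hval : (j : ℕ) ≠ k - 1 := Fin.val_ne_of_ne hj
  exact hlam j (by omega)
end
end
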